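/- Let I ⊆ A = K[x_1,…,x_n] be a nonzero monomial ideal, u ∈ ℝ^n nonzero, c ∈ ℝ, and let n_1, n_2 ≥ 1 be integers with q = n_2/n_1. Then S = {v ∈ ℝ^n : ⟨v,u⟩ = c} is a supporting hyperplane of conv(I^{n_1}) if and only if qS = {v ∈ ℝ^n : ⟨v,u⟩ = qc} is a supporting hyperplane of conv(I^{n_2}). -/

import Mathlib

open MvPolynomial Pointwise

attribute [local instance] Classical.propDecidable

noncomputable section

/-- The real exponent vector of a monomial exponent `a : Fin n →₀ ℕ`. -/
def expVec {n : ℕ} (a : Fin n →₀ ℕ) : Fin n → ℝ := fun i => (a i : ℝ)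

/-- The standard inner product on `ℝ^n`. -/
def dotR {n : ℕ} (u v : Fin n → ℝ) : ℝ := ∑ i, u i * v i

/-- A monomial ideal: an ideal generated by a set of monomials. -/
def IsMonomialIdeal {K : Type*} [Field K] {n : ℕ} (I : Ideal (MvPolynomial (Fin n) K)) : Prop :=
  ∃ S : Set (Fin n →₀ ℕ), I = Ideal.span ((fun a => (monomial a (1 : K))) '' S)

/-- The Newton polyhedron of an ideal: the convex hull of the exponent vectors of the
monomials belonging to the ideal. -/
def newtonPolyhedron {K : Type*} [Field K] {n : ℕ} (I : Ideal (MvPolynomial (Fin n) K)) :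
    Set (Fin n → ℝ) :=
  convexHull ℝ {v | ∃ a : Fin n →₀ ℕ, monomial a (1 : K) ∈ I ∧ v = expVec a}

/-- The hyperplane `{v : ⟨u,v⟩ = c}` is a supporting hyperplane of `C`:
`C ⊆ {v : ⟨u,v⟩ ≥ c}` and the hyperplane meets `C`. -/
def IsSupp {n : ℕ} (C : Set (Fin n → ℝ)) (u : Fin n → ℝ) (c : ℝ) : Prop :=
  (∀ v ∈ C, c ≤ dotR u v) ∧ ∃ v ∈ C, dotR u v = c

/-- `F` is a proper face of `C`: `F = S ∩ C` for some supporting hyperplane `S`, `F ≠ C`. -/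
def IsProperFace {n : ℕ} (C F : Set (Fin n → ℝ)) : Prop :=
  ∃ u c, u ≠ 0 ∧ IsSupp C u c ∧ F = {v ∈ C | dotR u v = c} ∧ F ≠ C

/-- A compact face is a proper face that is compact. -/
def IsCompactFace {n : ℕ} (C F : Set (Fin n → ℝ)) : Prop :=
  IsProperFace C F ∧ IsCompact F

/-- A maximal compact face: a compact face maximal under inclusion. -/
def IsMaxCompactFace {n : ℕ} (C F : Set (Fin n → ℝ)) : Prop :=
  IsCompactFace C F ∧ ∀ G, IsCompactFace C G → F ⊆ G → F = G

/-- The graded maximal ideal `(x_1, …, x_n)` of `K[x_1, …, x_n]`. -/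
def maxIdeal (K : Type*) [Field K] (n : ℕ) : Ideal (MvPolynomial (Fin n) K) :=
  Ideal.span (Set.range fun i => (X i : MvPolynomial (Fin n) K))

/-- `f` is a minimal generator of the monomial ideal `L` if `f ∈ L` and `f ∉ (x_1,…,x_n)·L`. -/
def IsMinGen {K : Type*} [Field K] {n : ℕ} (L : Ideal (MvPolynomial (Fin n) K))
    (f : MvPolynomial (Fin n) K) : Prop :=
  f ∈ L ∧ f ∉ maxIdeal K n * L

/-- `L` is a reduction ideal of `I`: `L ⊆ I` and `L·I^{m-1} = I^m` for some `m ≥ 1`. -/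
def IsReduction {K : Type*} [Field K] {n : ℕ} (L I : Ideal (MvPolynomial (Fin n) K)) : Prop :=
  L ≤ I ∧ ∃ m : ℕ, 1 ≤ m ∧ L * I ^ (m - 1) = I ^ m

/-!
Exponent sets of monomial ideals satisfy `Γ(I * J) = Γ(I) + Γ(J)`, and taking convex hulls commutes
with Minkowski sums, so `conv(I * J) = conv(I) + conv(J)`. As `conv(I)` is convex, its `m`-fold
Minkowski sum is a dilation, and hence `conv(I ^ m) = m • conv(I)` for `m ≥ 1`. A positive dilation
of a set carries its supporting hyperplanes along.
-/

/-- The exponent set `Γ(I)`: the exponents of the monomials in `I`, whose hull is `conv(I)`. -/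
def exponentSet {σ R : Type*} [CommSemiring R] (I : Ideal (MvPolynomial σ R)) : Set (σ →₀ ℕ) :=
  {a | monomial a (1 : R) ∈ I}

section MonomialSpans

variable {σ R : Type*} [CommSemiring R]

theorem span_monomial_mul_span_monomial (S T : Set (σ →₀ ℕ)) :
    Ideal.span ((fun a => monomial a (1 : R)) '' S) *
        Ideal.span ((fun a => monomial a (1 : R)) '' T) =
      Ideal.span ((fun a => monomial a (1 : R)) '' (S + T)) := by
  rw [Ideal.span_mul_span']
  congr 1
  exact (Set.image_image2_distrib fun a b => by rw [monomial_mul, one_mul]).symm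

theorem exponentSet_span_monomial [Nontrivial R] (S : Set (σ →₀ ℕ)) :
    exponentSet (Ideal.span ((fun a => monomial a (1 : R)) '' S)) = upperClosure S := by
  ext a
  simp [exponentSet, mem_ideal_span_monomial_image, support_monomial]

theorem exponentSet_add_subset_exponentSet_mul (I J : Ideal (MvPolynomial σ R)) :
    exponentSet I + exponentSet J ⊆ exponentSet (I * J) := by
  rintro _ ⟨a, ha, b, hb, rfl⟩
  simpa [exponentSet, monomial_mul] using Ideal.mul_mem_mul ha hb

end MonomialSpans

section MonomialIdeals

variable {K : Type*} [Field K] {n : ℕ} {I J : Ideal (MvPolynomial (Fin n) K)}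

theorem IsMonomialIdeal.one : IsMonomialIdeal (1 : Ideal (MvPolynomial (Fin n) K)) :=
  ⟨{0}, by simp⟩

theorem IsMonomialIdeal.mul (hI : IsMonomialIdeal I) (hJ : IsMonomialIdeal J) :
    IsMonomialIdeal (I * J) := by
  obtain ⟨S, rfl⟩ := hI
  obtain ⟨T, rfl⟩ := hJ
  exact ⟨S + T, span_monomial_mul_span_monomial S T⟩

theorem IsMonomialIdeal.pow (hI : IsMonomialIdeal I) (m : ℕ) : IsMonomialIdeal (I ^ m) := by
  induction m with
  | zero => simpa only [pow_zero] using IsMonomialIdeal.one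
  | succ m ih => simpa only [pow_succ] using ih.mul hI

theorem exponentSet_mul (hI : IsMonomialIdeal I) (hJ : IsMonomialIdeal J) :
    exponentSet (I * J) = exponentSet I + exponentSet J := by
  refine (exponentSet_add_subset_exponentSet_mul I J).antisymm' ?_
  obtain ⟨S, rfl⟩ := hI
  obtain ⟨T, rfl⟩ := hJ
  simp only [span_monomial_mul_span_monomial, exponentSet_span_monomial]
  rintro a ⟨_, ⟨s, hs, t, ht, rfl⟩, hle : s + t ≤ a⟩
  obtain ⟨d, rfl⟩ := exists_add_of_le hle
  exact ⟨s, subset_upperClosure hs, t + d, ⟨t, ht, le_self_add⟩, (add_assoc s t d).symm⟩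

end MonomialIdeals

section NewtonPolyhedra

variable {K : Type*} [Field K] {n : ℕ} {I J : Ideal (MvPolynomial (Fin n) K)}

theorem expVec_add (a b : Fin n →₀ ℕ) : expVec (a + b) = expVec a + expVec b := by
  ext i
  simp [expVec]

theorem newtonPolyhedron_eq_convexHull_image (I : Ideal (MvPolynomial (Fin n) K)) :
    newtonPolyhedron I = convexHull ℝ (expVec '' exponentSet I) := by
  simp only [newtonPolyhedron, exponentSet, Set.image, Set.mem_ofPred_eq, eq_comm]

theorem convex_newtonPolyhedron (I : Ideal (MvPolynomial (Fin n) K)) :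
    Convex ℝ (newtonPolyhedron I) :=
  convex_convexHull ℝ _

theorem newtonPolyhedron_mul (hI : IsMonomialIdeal I) (hJ : IsMonomialIdeal J) :
    newtonPolyhedron (I * J) = newtonPolyhedron I + newtonPolyhedron J := by
  simp only [newtonPolyhedron_eq_convexHull_image]
  rw [exponentSet_mul hI hJ, ← convexHull_add]
  congr 1
  exact Set.image_image2_distrib expVec_add

theorem newtonPolyhedron_pow (hI : IsMonomialIdeal I) {m : ℕ} (hm : 1 ≤ m) :
    newtonPolyhedron (I ^ m) = (m : ℝ) • newtonPolyhedron I := by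
  induction m, hm using Nat.le_induction with
  | base => simp only [pow_one, Nat.cast_one, one_smul]
  | succ m _ ih =>
    calc newtonPolyhedron (I ^ (m + 1))
        = newtonPolyhedron (I ^ m) + newtonPolyhedron I := by
          rw [pow_succ, newtonPolyhedron_mul (hI.pow m) hI]
      _ = (m : ℝ) • newtonPolyhedron I + (1 : ℝ) • newtonPolyhedron I := by rw [ih, one_smul]
      _ = ((m + 1 : ℕ) : ℝ) • newtonPolyhedron I := by
          rw [Nat.cast_add_one, (convex_newtonPolyhedron I).add_smul m.cast_nonneg zero_le_one]

end NewtonPolyhedra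

section SupportingHyperplanes

variable {n : ℕ}

theorem dotR_smul (u v : Fin n → ℝ) (r : ℝ) : dotR u (r • v) = r * dotR u v :=
  dotProduct_smul r u v

theorem isSupp_smul_iff {C : Set (Fin n → ℝ)} {u : Fin n → ℝ} {c r : ℝ} (hr : 0 < r) :
    IsSupp (r • C) u (r * c) ↔ IsSupp C u c := by
  simp only [IsSupp, ← Set.image_smul, Set.forall_mem_image, Set.exists_mem_image, dotR_smul,
    mul_le_mul_iff_right₀ hr, mul_right_inj' hr.ne']

end SupportingHyperplanes

theorem stmt8 {K : Type*} [Field K] {n : ℕ} (I : Ideal (MvPolynomial (Fin n) K))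
    (hI : IsMonomialIdeal I) (hne : I ≠ ⊥)
    (u : Fin n → ℝ) (hu : u ≠ 0) (c : ℝ) (n₁ n₂ : ℕ) (h1 : 1 ≤ n₁) (h2 : 1 ≤ n₂) :
    IsSupp (newtonPolyhedron (I ^ n₁)) u c ↔
      IsSupp (newtonPolyhedron (I ^ n₂)) u (((n₂ : ℝ) / (n₁ : ℝ)) * c) := by
  have hn₁ : (0 : ℝ) < n₁ := by exact_mod_cast h1
  have hn₂ : (0 : ℝ) < n₂ := by exact_mod_cast h2
  calc IsSupp (newtonPolyhedron (I ^ n₁)) u c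
      ↔ IsSupp ((n₁ : ℝ) • newtonPolyhedron I) u (n₁ * (c / n₁)) := by
        rw [newtonPolyhedron_pow hI h1, mul_div_cancel₀ c hn₁.ne']
    _ ↔ IsSupp (newtonPolyhedron I) u (c / n₁) := isSupp_smul_iff hn₁
    _ ↔ IsSupp ((n₂ : ℝ) • newtonPolyhedron I) u (n₂ * (c / n₁)) := (isSupp_smul_iff hn₂).symm
    _ ↔ IsSupp (newtonPolyhedron (I ^ n₂)) u (((n₂ : ℝ) / (n₁ : ℝ)) * c) := by
        rw [newtonPolyhedron_pow hI h2, mul_div_left_comm, mul_comm c]
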